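/- Let d = 2 or d = 3, let 1 ≤ q < ∞ and 1 ≤ p ≤ ∞ with conjugate exponent p' (so 1/p + 1/p' = 1), let Δt > 0 and L ≥ 0 satisfy Δt·L ≤ 1/4, and let w₁, w₂ : ℝ^d → ℝ^d be everywhere-differentiable maps whose Jacobian matrices have Frobenius norm at most L at every point. Let v : ℝ^d → ℝ^m be continuously differentiable with compact support. Then ‖v ∘ X₁(w₁) − v ∘ X₁(w₂)‖_{L^q(ℝ^d)} ≤ 2^{1/(q·p')} · Δt · ‖w₁ − w₂‖_{L^{pq}(ℝ^d)} · ‖ ‖Dv‖_F ‖_{L^{q·p'}(ℝ^d)}, where X₁(wᵢ)(x) = x − Δt·wᵢ(x), ‖Dv‖_F denotes the pointwise Frobenius norm of the Jacobian matrix of v, the L^r-norms are with respect to Lebesgue measure (with the usual essential-supremum convention when r = ∞), and 2^{1/(q·p')} is interpreted as 1 when p' = ∞. -/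

import Mathlib

open MeasureTheory ENNReal

/-- The Frobenius norm of the Jacobian matrix of `f` at `x`. -/
noncomputable def jacobianFrobeniusNorm {d m : ℕ}
    (f : EuclideanSpace ℝ (Fin d) → EuclideanSpace ℝ (Fin m))
    (x : EuclideanSpace ℝ (Fin d)) : ℝ :=
  Real.sqrt (∑ i, ∑ j, (fderiv ℝ f x (EuclideanSpace.single j (1 : ℝ)) i) ^ 2)

/-!
The difference `v (X₁ x) - v (X₂ x)` is an integral over the segment from `X₂ x` to `X₁ x`, and
Minkowski's integral inequality reduces its `L^q` norm to that of `Dv (X_s x) (X₁ x - X₂ x)`, where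
`X_s` interpolates linearly between the two maps, and Hölder's inequality separates the two factors.
Composing with `X_s = id - u` only costs a power of `C` when the pushforward of Lebesgue measure
under `X_s` is at most `C` times Lebesgue measure, that is, when `1 ≤ C * |det (1 - Du)|`.

Such a bound holds in every dimension `d`: by AM-GM, `|det M| ≤ (‖M‖_F / √d) ^ d`, which is applied
to `M = (1 - Du)⁻¹`, whose Frobenius norm is at most `√d + a / (1 - a)` by the Neumann series when
`‖Du‖_F ≤ a < 1`. This gives `C = exp (√d * a / (1 - a))`, which is at most `2` for `d ≤ 4` and
`a ≤ 1 / 4`.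
-/

section Averaging

variable {α β : Type*} [MeasurableSpace α] [MeasurableSpace β] {ν : Measure β}
  [IsProbabilityMeasure ν]

lemma lintegral_rpow_le_lintegral_rpow {g : β → ℝ≥0∞} (hg : AEMeasurable g ν) {q : ℝ}
    (hq : 1 ≤ q) : (∫⁻ s, g s ∂ν) ^ q ≤ ∫⁻ s, g s ^ q ∂ν := by
  have hmono := eLpNorm'_le_eLpNorm'_of_exponent_le one_pos hq ν hg.aestronglyMeasurable
  simp only [eLpNorm'_eq_lintegral_enorm, enorm_eq_self, ENNReal.rpow_one, one_div,
    inv_one] at hmono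
  exact (ENNReal.le_rpow_inv_iff (one_pos.trans_le hq)).1 hmono

lemma eLpNorm_lintegral_le {μ : Measure α} [SFinite μ] {G : α → β → ℝ≥0∞}
    (hG : Measurable (Function.uncurry G)) {q C : ℝ≥0∞} (hq : 1 ≤ q)
    (hC : ∀ᵐ s ∂ν, eLpNorm (G · s) q μ ≤ C) :
    eLpNorm (fun x ↦ ∫⁻ s, G x s ∂ν) q μ ≤ C := by
  rcases eq_or_ne q ∞ with rfl | hq_top
  · have hGC : ∀ᵐ x ∂μ, ∀ᵐ s ∂ν, G x s ≤ C := by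
      refine (Measure.ae_ae_comm (p := fun x s ↦ G x s ≤ C)
        (measurableSet_le hG measurable_const)).2 ?_
      filter_upwards [hC] with s hs
      filter_upwards [ae_le_eLpNormEssSup (f := (G · s)) (μ := μ)] with x hx
      exact hx.trans hs
    refine eLpNormEssSup_le_of_ae_enorm_bound ?_
    filter_upwards [hGC] with x hx
    simpa using lintegral_mono_ae hx
  · have hq_one : 1 ≤ q.toReal := by
      simpa using ENNReal.toReal_mono hq_top hq
    have hnorm (g : α → ℝ≥0∞) : eLpNorm g q μ ≤ C ↔ ∫⁻ x, g x ^ q.toReal ∂μ ≤ C ^ q.toReal := by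
      rw [eLpNorm_eq_lintegral_rpow_enorm_toReal (one_pos.trans_le hq).ne' hq_top, one_div,
        ENNReal.rpow_inv_le_iff (one_pos.trans_le hq_one)]
      simp only [enorm_eq_self]
    simp only [hnorm] at hC ⊢
    calc ∫⁻ x, (∫⁻ s, G x s ∂ν) ^ q.toReal ∂μ ≤ ∫⁻ x, ∫⁻ s, G x s ^ q.toReal ∂ν ∂μ :=
          lintegral_mono fun x ↦ lintegral_rpow_le_lintegral_rpow
            (hG.comp measurable_prodMk_left).aemeasurable hq_one
      _ = ∫⁻ s, ∫⁻ x, G x s ^ q.toReal ∂μ ∂ν :=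
          lintegral_lintegral_swap (hG.pow_const _).aemeasurable
      _ ≤ ∫⁻ _, C ^ q.toReal ∂ν := lintegral_mono_ae hC
      _ = C ^ q.toReal := by simp

end Averaging

section Composition

variable {α : Type*} [MeasurableSpace α] {μ : Measure α}

lemma eLpNorm_comp_le_of_map_le {β F : Type*} [MeasurableSpace β] [NormedAddCommGroup F]
    {ν : Measure β} {X : α → β} (hX : AEMeasurable X μ) {c : ℝ≥0∞} (hc : c ≠ 0)
    (hmap : μ.map X ≤ c • ν) {f : β → F} (hf : AEStronglyMeasurable f ν) (r : ℝ≥0∞) :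
    eLpNorm (fun x ↦ f (X x)) r μ ≤ c ^ r⁻¹.toReal * eLpNorm f r ν := by
  have hmap_ac : μ.map X ≪ ν := (Measure.absolutelyContinuous_of_le hmap).trans
    Measure.smul_absolutelyContinuous
  calc eLpNorm (fun x ↦ f (X x)) r μ = eLpNorm f r (μ.map X) :=
        (eLpNorm_map_measure (hf.mono_ac hmap_ac) hX).symm
    _ ≤ eLpNorm f r (c • ν) := eLpNorm_mono_measure f hmap
    _ = _ := by rw [eLpNorm_smul_measure_of_ne_zero hc, one_div, smul_eq_mul, toReal_inv]

variable {E F : Type*} [NormedAddCommGroup E] [NormedSpace ℝ E] [NormedAddCommGroup F]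
  [NormedSpace ℝ F] {v : E → F}

lemma enorm_sub_le_lintegral_fderiv_lineMap (hv : ContDiff ℝ 1 v) (a b : E) :
    ‖v b - v a‖ₑ ≤
      ∫⁻ s in Set.Icc (0 : ℝ) 1, ‖fderiv ℝ v (AffineMap.lineMap a b s) (b - a)‖ₑ := by
  have hγ : ContDiff ℝ 1 (v ∘ AffineMap.lineMap (k := ℝ) a b) :=
    hv.comp (AffineMap.contDiff_lineMap a b)
  have hderiv (s : ℝ) : deriv (v ∘ AffineMap.lineMap (k := ℝ) a b) s =
      fderiv ℝ v (AffineMap.lineMap a b s) (b - a) :=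
    ((hv.differentiable one_ne_zero _).hasFDerivAt.comp_hasDerivAt s
      AffineMap.hasDerivAt_lineMap).deriv
  simpa [hderiv] using enorm_sub_le_lintegral_deriv_of_contDiffOn_Icc hγ.contDiffOn zero_le_one

lemma eLpNorm_clm_apply_le {T : α → E →L[ℝ] F} {h : α → E} (hT : AEStronglyMeasurable T μ)
    (hh : AEStronglyMeasurable h μ) {q r t : ℝ≥0∞} [HolderTriple r t q] :
    eLpNorm (fun x ↦ T x (h x)) q μ ≤ eLpNorm T r μ * eLpNorm h t μ := by
  simpa using eLpNorm_le_eLpNorm_mul_eLpNorm'_of_norm hT hh (fun A y ↦ A y) 1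
    (.of_forall fun x ↦ by simpa using (T x).le_opNorm (h x))

lemma eLpNorm_comp_sub_comp_le [SFinite μ] [MeasurableSpace E] [BorelSpace E]
    [SecondCountableTopology E] {ν : Measure E} (hv : ContDiff ℝ 1 v) {X₁ X₂ : α → E}
    (hX₁ : Measurable X₁) (hX₂ : Measurable X₂) {c : ℝ≥0∞} (hc : c ≠ 0)
    (hmap : ∀ s ∈ Set.Icc (0 : ℝ) 1,
      μ.map (fun x ↦ AffineMap.lineMap (X₂ x) (X₁ x) s) ≤ c • ν)
    {q r t : ℝ≥0∞} (hq : 1 ≤ q) [HolderTriple r t q] :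
    eLpNorm (fun x ↦ v (X₁ x) - v (X₂ x)) q μ ≤
      c ^ r⁻¹.toReal * eLpNorm (fderiv ℝ v) r ν * eLpNorm (fun x ↦ X₁ x - X₂ x) t μ := by
  have hDv : Continuous (fderiv ℝ v) := hv.continuous_fderiv one_ne_zero
  let G (x : α) (s : ℝ) : ℝ≥0∞ := ‖fderiv ℝ v (AffineMap.lineMap (X₂ x) (X₁ x) s) (X₁ x - X₂ x)‖ₑ
  have hG : Measurable (Function.uncurry G) := by
    have hline : Measurable fun z : α × ℝ ↦ AffineMap.lineMap (X₂ z.1) (X₁ z.1) z.2 := by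
      simp only [AffineMap.lineMap_apply_module]
      fun_prop
    have hdiff : Measurable fun z : α × ℝ ↦ X₁ z.1 - X₂ z.1 := by fun_prop
    exact (isBoundedBilinearMap_apply.continuous.comp_stronglyMeasurable
      ((hDv.comp_stronglyMeasurable hline.stronglyMeasurable).prodMk
        hdiff.stronglyMeasurable)).enorm
  have : IsProbabilityMeasure (volume.restrict (Set.Icc (0 : ℝ) 1)) := ⟨by simp⟩
  have hsegment (x : α) :
      ‖v (X₁ x) - v (X₂ x)‖ₑ ≤ ‖∫⁻ s in Set.Icc (0 : ℝ) 1, G x s‖ₑ :=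
    enorm_sub_le_lintegral_fderiv_lineMap hv (X₂ x) (X₁ x)
  refine (eLpNorm_mono_enorm hsegment).trans (eLpNorm_lintegral_le hG hq ?_)
  filter_upwards [ae_restrict_mem measurableSet_Icc] with s hs
  have hX : Measurable fun x ↦ AffineMap.lineMap (X₂ x) (X₁ x) s := by
    simp only [AffineMap.lineMap_apply_module]
    fun_prop
  calc eLpNorm (G · s) q μ
      = eLpNorm (fun x ↦ fderiv ℝ v (AffineMap.lineMap (X₂ x) (X₁ x) s) (X₁ x - X₂ x)) q μ :=
        eLpNorm_enorm _
    _ ≤ eLpNorm (fun x ↦ fderiv ℝ v (AffineMap.lineMap (X₂ x) (X₁ x) s)) r μ *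
          eLpNorm (fun x ↦ X₁ x - X₂ x) t μ :=
        eLpNorm_clm_apply_le
          (hDv.comp_stronglyMeasurable hX.stronglyMeasurable).aestronglyMeasurable
          (hX₁.sub hX₂).aestronglyMeasurable
    _ ≤ _ := by
        gcongr
        exact eLpNorm_comp_le_of_map_le hX.aemeasurable hc (hmap s hs)
          hDv.aestronglyMeasurable r

end Composition

section ChangeOfVariables

variable {E : Type*} [NormedAddCommGroup E] [NormedSpace ℝ E]

lemma injective_id_sub_of_nnnorm_fderiv_le {u : E → E} (hu : Differentiable ℝ u) {a : NNReal}
    (ha : a < 1) (hbound : ∀ x, ‖fderiv ℝ u x‖₊ ≤ a) : Function.Injective fun x ↦ x - u x := by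
  have hlip : LipschitzWith a (-u) := (lipschitzWith_of_nnnorm_fderiv_le hu hbound).neg
  simpa [sub_eq_add_neg] using!
    (AntilipschitzWith.id.add_lipschitzWith hlip (by simpa using ha)).injective

lemma map_le_smul_of_one_le_mul_abs_det [FiniteDimensional ℝ E] [MeasurableSpace E]
    [BorelSpace E] (μ : Measure E) [μ.IsAddHaarMeasure] {X : E → E} (hX : Differentiable ℝ X)
    (hinj : Function.Injective X) {C : ℝ} (hdet : ∀ x, 1 ≤ C * |(fderiv ℝ X x).det|) :
    μ.map X ≤ ENNReal.ofReal C • μ := by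
  refine Measure.le_iff.2 fun A hA ↦ ?_
  have hmeas : Measurable X := hX.continuous.measurable
  rw [Measure.map_apply hmeas hA, Measure.smul_apply, smul_eq_mul]
  calc μ (X ⁻¹' A) = ∫⁻ _ in X ⁻¹' A, 1 ∂μ := by simp
    _ ≤ ∫⁻ x in X ⁻¹' A, ENNReal.ofReal C * ENNReal.ofReal |(fderiv ℝ X x).det| ∂μ := by
        refine lintegral_mono fun x ↦ ?_
        rw [← ENNReal.ofReal_mul' (abs_nonneg _)]
        exact ENNReal.one_le_ofReal.2 (hdet x)
    _ = ENNReal.ofReal C * μ (X '' (X ⁻¹' A)) := by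
        rw [lintegral_const_mul' _ _ ofReal_ne_top,
          lintegral_abs_det_fderiv_eq_addHaar_image μ (hmeas hA)
            (fun x _ ↦ (hX x).hasFDerivAt.hasFDerivWithinAt) hinj.injOn]
    _ ≤ ENNReal.ofReal C * μ A := by
        gcongr
        exact Set.image_preimage_subset _ _

end ChangeOfVariables

section Determinant

open Matrix
open scoped ComplexOrder

variable {n : Type*} [Fintype n]

lemma prod_le_average_pow_card {z : n → ℝ} (hz : ∀ i, 0 ≤ z i) :
    ∏ i, z i ≤ ((∑ i, z i) / Fintype.card n) ^ Fintype.card n := by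
  rcases isEmpty_or_nonempty n with _ | _
  · simp
  have hcard : (0 : ℝ) < Fintype.card n := by exact_mod_cast Fintype.card_pos
  have hmean := Real.geom_mean_le_arith_mean Finset.univ (fun _ ↦ 1) z
    (fun _ _ ↦ zero_le_one) (by simpa using hcard) fun i _ ↦ hz i
  simp only [Real.rpow_one, one_mul, Finset.sum_const, Finset.card_univ, nsmul_eq_mul,
    mul_one] at hmean
  rwa [Real.rpow_inv_le_iff_of_pos (Finset.prod_nonneg fun i _ ↦ hz i)
    (div_nonneg (Finset.sum_nonneg fun i _ ↦ hz i) hcard.le) hcard, Real.rpow_natCast] at hmean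

variable {𝕜 : Type*} [RCLike 𝕜]

lemma norm_det_le_norm_trace_div_pow_card [DecidableEq n] {P : Matrix n n 𝕜} (hP : P.PosSemidef) :
    ‖P.det‖ ≤ (‖P.trace‖ / Fintype.card n) ^ Fintype.card n := by
  have hz := hP.eigenvalues_nonneg
  rw [hP.isHermitian.det_eq_prod_eigenvalues, hP.isHermitian.trace_eq_sum_eigenvalues,
    ← RCLike.ofReal_prod, ← RCLike.ofReal_sum,
    RCLike.norm_of_nonneg (Finset.prod_nonneg fun i _ ↦ hz i),
    RCLike.norm_of_nonneg (Finset.sum_nonneg fun i _ ↦ hz i)]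
  exact prod_le_average_pow_card hz

open scoped Matrix.Norms.Frobenius

lemma norm_trace_conjTranspose_mul_self (M : Matrix n n 𝕜) : ‖(Mᴴ * M).trace‖ = ‖M‖ ^ 2 := by
  have htrace : (Mᴴ * M).trace = ((∑ i, ∑ j, ‖M i j‖ ^ 2 : ℝ) : 𝕜) := by
    rw [Finset.sum_comm]
    simp [trace, mul_apply, RCLike.conj_mul]
  rw [htrace, RCLike.norm_of_nonneg (by positivity), frobenius_norm_def, ← Real.sqrt_eq_rpow]
  simp only [Real.rpow_two]
  rw [Real.sq_sqrt (by positivity)]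

lemma norm_det_le_norm_div_sqrt_pow_card [DecidableEq n] (M : Matrix n n 𝕜) :
    ‖M.det‖ ≤ (‖M‖ / √(Fintype.card n)) ^ Fintype.card n := by
  have hgram := norm_det_le_norm_trace_div_pow_card (posSemidef_conjTranspose_mul_self M)
  rw [det_mul, det_conjTranspose, norm_mul, norm_star, norm_trace_conjTranspose_mul_self] at hgram
  refine le_of_sq_le_sq ?_ (by positivity)
  rwa [sq, pow_right_comm, div_pow, Real.sq_sqrt (Nat.cast_nonneg _)]

lemma norm_inverse_one_sub_le {R : Type*} [NormedRing R] [HasSummableGeomSeries R] {t : R}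
    (ht : ‖t‖ < 1) : ‖Ring.inverse (1 - t)‖ ≤ ‖(1 : R)‖ - 1 + (1 - ‖t‖)⁻¹ := by
  rw [NormedRing.inverse_one_sub t ht]
  exact tsum_geometric_le_of_norm_lt_one t ht

lemma one_le_exp_mul_norm_det_one_sub [DecidableEq n] {A : Matrix n n 𝕜} {a : ℝ} (hA : ‖A‖ ≤ a)
    (ha : a < 1) :
    1 ≤ Real.exp (√(Fintype.card n) * (a / (1 - a))) * ‖(1 - A).det‖ := by
  set k := Fintype.card n
  have hinv : ‖(1 - A)⁻¹‖ ≤ √k + a / (1 - a) := by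
    have hsum : a / (1 - a) = (1 - a)⁻¹ - 1 := by
      field_simp [(sub_pos.2 ha).ne']
      ring
    have hone : ‖(1 : Matrix n n 𝕜)‖ = √k := by
      simpa [k] using congrArg NNReal.toReal (frobenius_nnnorm_one (n := n) (α := 𝕜))
    have hneumann := norm_inverse_one_sub_le (hA.trans_lt ha)
    have hmono : (1 - ‖A‖)⁻¹ ≤ (1 - a)⁻¹ := inv_anti₀ (sub_pos.2 ha) (by linarith)
    rw [nonsing_inv_eq_ringInverse]
    linarith
  have hexp : ‖(1 - A)⁻¹‖ / √k ≤ Real.exp (a / (1 - a) / √k) :=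
    calc ‖(1 - A)⁻¹‖ / √k ≤ √k / √k + a / (1 - a) / √k := by rw [← add_div]; gcongr
      _ ≤ a / (1 - a) / √k + 1 := by linarith [div_self_le_one √k]
      _ ≤ _ := Real.add_one_le_exp _
  have hdet : ‖(1 - A)⁻¹.det‖ ≤ Real.exp (√k * (a / (1 - a))) :=
    calc ‖(1 - A)⁻¹.det‖ ≤ (‖(1 - A)⁻¹‖ / √k) ^ k := norm_det_le_norm_div_sqrt_pow_card _
      _ ≤ Real.exp (a / (1 - a) / √k) ^ k := by gcongr
      _ = Real.exp (√k * (a / (1 - a))) := by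
        rw [← Real.exp_nat_mul, mul_div_left_comm, Real.div_sqrt, mul_comm]
  have hunit : IsUnit (1 - A) := (Units.oneSub A (hA.trans_lt ha)).isUnit
  calc 1 = ‖(1 - A)⁻¹.det‖ * ‖(1 - A).det‖ := by
        rw [← norm_mul, det_nonsing_inv_mul_det _ ((isUnit_iff_isUnit_det _).1 hunit), norm_one]
    _ ≤ _ := by gcongr

lemma exp_sqrt_mul_div_one_sub_le_two {d : ℕ} (hd : d ≤ 4) {a : ℝ} (ha : a ≤ 1 / 4) :
    Real.exp (√d * (a / (1 - a))) ≤ 2 := by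
  have hsqrt : √d ≤ 2 := Real.sqrt_le_iff.2 ⟨zero_le_two, by norm_num; exact_mod_cast hd⟩
  have hfrac : a / (1 - a) ≤ 1 / 3 := by
    rw [div_le_iff₀ (by linarith)]
    linarith
  rw [← Real.le_log_iff_exp_le two_pos]
  calc √d * (a / (1 - a)) ≤ √d * (1 / 3) := by gcongr
    _ ≤ 2 * (1 / 3) := by gcongr
    _ ≤ Real.log 2 := by linarith [Real.log_two_gt_d9]

end Determinant

section Jacobian

open scoped Matrix.Norms.Frobenius

variable {d m : ℕ}

/-- The matrix of a continuous linear map between Euclidean spaces in the standard bases, as a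
linear function of the map. -/
noncomputable def standardMatrix :
    (EuclideanSpace ℝ (Fin d) →L[ℝ] EuclideanSpace ℝ (Fin m)) →ₗ[ℝ] Matrix (Fin m) (Fin d) ℝ :=
  (LinearMap.toMatrix (EuclideanSpace.basisFun (Fin d) ℝ).toBasis
    (EuclideanSpace.basisFun (Fin m) ℝ).toBasis).toLinearMap ∘ₗ ContinuousLinearMap.coeLM ℝ

lemma standardMatrix_apply (T : EuclideanSpace ℝ (Fin d) →L[ℝ] EuclideanSpace ℝ (Fin m))
    (i : Fin m) (j : Fin d) : standardMatrix T i j = T (EuclideanSpace.single j 1) i := by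
  simp [standardMatrix, LinearMap.toMatrix_apply]

lemma det_standardMatrix (T : EuclideanSpace ℝ (Fin d) →L[ℝ] EuclideanSpace ℝ (Fin d)) :
    (standardMatrix T).det = T.det :=
  LinearMap.det_toMatrix _ _

lemma standardMatrix_id :
    standardMatrix (ContinuousLinearMap.id ℝ (EuclideanSpace ℝ (Fin d))) = 1 :=
  LinearMap.toMatrix_id _

lemma norm_le_norm_standardMatrix
    (T : EuclideanSpace ℝ (Fin d) →L[ℝ] EuclideanSpace ℝ (Fin m)) : ‖T‖ ≤ ‖standardMatrix T‖ := by
  refine T.opNorm_le_bound (norm_nonneg _) fun h ↦ ?_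
  have hcol : Matrix.replicateCol Unit (T h).ofLp =
      standardMatrix T * Matrix.replicateCol Unit h.ofLp := by
    rw [← Matrix.replicateCol_mulVec]
    congr 1
    exact (LinearMap.toMatrix_mulVec_repr (EuclideanSpace.basisFun (Fin d) ℝ).toBasis
      (EuclideanSpace.basisFun (Fin m) ℝ).toBasis T.toLinearMap h).symm
  calc ‖T h‖ = ‖standardMatrix T * Matrix.replicateCol Unit h.ofLp‖ := by
        rw [← hcol, Matrix.frobenius_norm_replicateCol]
    _ ≤ ‖standardMatrix T‖ * ‖Matrix.replicateCol Unit h.ofLp‖ := Matrix.frobenius_norm_mul _ _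
    _ = ‖standardMatrix T‖ * ‖h‖ := by rw [Matrix.frobenius_norm_replicateCol]

lemma jacobianFrobeniusNorm_eq_norm_standardMatrix
    (f : EuclideanSpace ℝ (Fin d) → EuclideanSpace ℝ (Fin m)) (x : EuclideanSpace ℝ (Fin d)) :
    jacobianFrobeniusNorm f x = ‖standardMatrix (fderiv ℝ f x)‖ := by
  simp [jacobianFrobeniusNorm, Matrix.frobenius_norm_def, Real.sqrt_eq_rpow, standardMatrix_apply]

lemma norm_fderiv_le_jacobianFrobeniusNorm
    (f : EuclideanSpace ℝ (Fin d) → EuclideanSpace ℝ (Fin m)) (x : EuclideanSpace ℝ (Fin d)) :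
    ‖fderiv ℝ f x‖ ≤ jacobianFrobeniusNorm f x :=
  (norm_le_norm_standardMatrix _).trans_eq (jacobianFrobeniusNorm_eq_norm_standardMatrix f x).symm

lemma jacobianFrobeniusNorm_const_smul_lineMap_le
    {f g : EuclideanSpace ℝ (Fin d) → EuclideanSpace ℝ (Fin m)} {x : EuclideanSpace ℝ (Fin d)}
    (hf : DifferentiableAt ℝ f x) (hg : DifferentiableAt ℝ g x) {L : ℝ}
    (hfL : jacobianFrobeniusNorm f x ≤ L) (hgL : jacobianFrobeniusNorm g x ≤ L)
    {c : ℝ} (hc : 0 ≤ c) {s : ℝ} (hs : s ∈ Set.Icc (0 : ℝ) 1) :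
    jacobianFrobeniusNorm (fun y ↦ c • AffineMap.lineMap (f y) (g y) s) x ≤ c * L := by
  have hderiv : fderiv ℝ (fun y ↦ c • AffineMap.lineMap (f y) (g y) s) x =
      c • AffineMap.lineMap (fderiv ℝ f x) (fderiv ℝ g x) s := by
    simp only [AffineMap.lineMap_apply_module]
    exact (((hf.hasFDerivAt.const_smul (1 - s)).add
      (hg.hasFDerivAt.const_smul s)).const_smul c).fderiv
  have hconvex := (convex_closedBall (0 : Matrix (Fin m) (Fin d) ℝ) L).lineMap_mem
    (x := standardMatrix (fderiv ℝ f x)) (y := standardMatrix (fderiv ℝ g x))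
    (by simpa [← jacobianFrobeniusNorm_eq_norm_standardMatrix])
    (by simpa [← jacobianFrobeniusNorm_eq_norm_standardMatrix]) hs
  rw [mem_closedBall_zero_iff] at hconvex
  rw [jacobianFrobeniusNorm_eq_norm_standardMatrix, hderiv, map_smul, norm_smul,
    Real.norm_of_nonneg hc]
  gcongr
  simpa [AffineMap.lineMap_apply_module] using hconvex

lemma one_le_exp_mul_abs_det_id_sub_fderiv
    {u : EuclideanSpace ℝ (Fin d) → EuclideanSpace ℝ (Fin d)} {x : EuclideanSpace ℝ (Fin d)}
    {a : ℝ} (hu : jacobianFrobeniusNorm u x ≤ a) (ha : a < 1) :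
    1 ≤ Real.exp (√d * (a / (1 - a))) *
      |(ContinuousLinearMap.id ℝ (EuclideanSpace ℝ (Fin d)) - fderiv ℝ u x).det| := by
  rw [jacobianFrobeniusNorm_eq_norm_standardMatrix] at hu
  rw [← det_standardMatrix, map_sub, standardMatrix_id]
  simpa using one_le_exp_mul_norm_det_one_sub hu ha

end Jacobian

lemma holderTriple_mul_mul {p p' q : ℝ≥0∞} [HolderConjugate p p'] (hq : q ≠ 0) :
    HolderTriple (q * p') (p * q) q where
  inv_add_inv_eq_inv := by
    rw [ENNReal.mul_inv (.inl hq) (.inr (HolderConjugate.ne_zero p' p)),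
      ENNReal.mul_inv (.inl (HolderConjugate.ne_zero p p')) (.inr hq), mul_comm p⁻¹, ← mul_add,
      HolderConjugate.inv_add_inv_eq_one, mul_one]

section Characteristics

variable {d m : ℕ}

lemma map_id_sub_volume_le
    {u : EuclideanSpace ℝ (Fin d) → EuclideanSpace ℝ (Fin d)} (hu : Differentiable ℝ u) {a : ℝ}
    (ha : a < 1) (hJ : ∀ x, jacobianFrobeniusNorm u x ≤ a) :
    volume.map (fun x ↦ x - u x) ≤
      ENNReal.ofReal (Real.exp (√d * (a / (1 - a)))) • volume := by
  have hbound (x) : ‖fderiv ℝ u x‖ ≤ a := (norm_fderiv_le_jacobianFrobeniusNorm u x).trans (hJ x)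
  have hinj : Function.Injective fun x ↦ x - u x := by
    lift a to NNReal using (norm_nonneg _).trans (hbound 0)
    exact injective_id_sub_of_nnnorm_fderiv_le hu (by exact_mod_cast ha) hbound
  refine map_le_smul_of_one_le_mul_abs_det volume (differentiable_id.sub hu) hinj fun x ↦ ?_
  rw [fderiv_sub differentiableAt_id (hu x), fderiv_id]
  exact one_le_exp_mul_abs_det_id_sub_fderiv (hJ x) ha

lemma map_lineMap_sub_smul_volume_le {Δt L : ℝ} (hΔt : 0 ≤ Δt) (hΔtL : Δt * L < 1)
    {w₁ w₂ : EuclideanSpace ℝ (Fin d) → EuclideanSpace ℝ (Fin d)}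
    (hw₁ : Differentiable ℝ w₁) (hw₂ : Differentiable ℝ w₂)
    (hJ₁ : ∀ x, jacobianFrobeniusNorm w₁ x ≤ L) (hJ₂ : ∀ x, jacobianFrobeniusNorm w₂ x ≤ L)
    {s : ℝ} (hs : s ∈ Set.Icc (0 : ℝ) 1) :
    volume.map (fun x ↦ AffineMap.lineMap (x - Δt • w₁ x) (x - Δt • w₂ x) s) ≤
      ENNReal.ofReal (Real.exp (√d * (Δt * L / (1 - Δt * L)))) • volume := by
  have hline (x) : AffineMap.lineMap (x - Δt • w₁ x) (x - Δt • w₂ x) s =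
      x - Δt • AffineMap.lineMap (w₁ x) (w₂ x) s := by
    simp only [AffineMap.lineMap_apply_module]
    module
  have hdiff : Differentiable ℝ fun x ↦ Δt • AffineMap.lineMap (w₁ x) (w₂ x) s := by
    simp only [AffineMap.lineMap_apply_module]
    fun_prop
  simp only [hline]
  exact map_id_sub_volume_le hdiff hΔtL fun x ↦
    jacobianFrobeniusNorm_const_smul_lineMap_le (hw₁ x) (hw₂ x) (hJ₁ x) (hJ₂ x) hΔt hs

theorem Lq_diff_comp_characteristic_general {q p p' : ℝ≥0∞} (hq : 1 ≤ q)
    (hconj : p⁻¹ + p'⁻¹ = 1) {Δt L : ℝ} (hΔt : 0 ≤ Δt) (hΔtL : Δt * L < 1)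
    {w₁ w₂ : EuclideanSpace ℝ (Fin d) → EuclideanSpace ℝ (Fin d)}
    (hw₁ : Differentiable ℝ w₁) (hw₂ : Differentiable ℝ w₂)
    (hJ₁ : ∀ x, jacobianFrobeniusNorm w₁ x ≤ L) (hJ₂ : ∀ x, jacobianFrobeniusNorm w₂ x ≤ L)
    {v : EuclideanSpace ℝ (Fin d) → EuclideanSpace ℝ (Fin m)} (hv : ContDiff ℝ 1 v) :
    eLpNorm (fun x ↦ v (x - Δt • w₁ x) - v (x - Δt • w₂ x)) q volume ≤
      ENNReal.ofReal (Real.exp (√d * (Δt * L / (1 - Δt * L)))) ^ ((q * p')⁻¹).toReal *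
        ENNReal.ofReal Δt * eLpNorm (fun x ↦ w₁ x - w₂ x) (p * q) volume *
        eLpNorm (fun y ↦ jacobianFrobeniusNorm v y) (q * p') volume := by
  have : HolderConjugate p p' := holderConjugate_iff.2 hconj
  have : HolderTriple (q * p') (p * q) q := holderTriple_mul_mul (one_pos.trans_le hq).ne'
  have hw₁_cont := hw₁.continuous
  have hw₂_cont := hw₂.continuous
  have hX : eLpNorm (fun x ↦ (x - Δt • w₁ x) - (x - Δt • w₂ x)) (p * q) volume =
      ENNReal.ofReal Δt * eLpNorm (fun x ↦ w₁ x - w₂ x) (p * q) volume := by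
    have hdiff : (fun x ↦ (x - Δt • w₁ x) - (x - Δt • w₂ x)) =
        (-Δt) • fun x ↦ w₁ x - w₂ x := by
      ext1 x
      simp only [Pi.smul_apply]
      module
    rw [hdiff, eLpNorm_const_smul, enorm_neg, Real.enorm_of_nonneg hΔt]
  have hDv : eLpNorm (fderiv ℝ v) (q * p') volume ≤
      eLpNorm (fun y ↦ jacobianFrobeniusNorm v y) (q * p') volume :=
    eLpNorm_mono_real fun x ↦ norm_fderiv_le_jacobianFrobeniusNorm v x
  have hmain := eLpNorm_comp_sub_comp_le (μ := volume) (ν := volume) hv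
    (X₁ := fun x ↦ x - Δt • w₁ x) (X₂ := fun x ↦ x - Δt • w₂ x)
    (by fun_prop) (by fun_prop) (by positivity)
    (fun s hs ↦ map_lineMap_sub_smul_volume_le hΔt hΔtL hw₂ hw₁ hJ₂ hJ₁ hs)
    hq (r := q * p') (t := p * q)
  rw [hX] at hmain
  refine hmain.trans ?_
  rw [mul_right_comm, ← mul_assoc]
  gcongr

end Characteristics

/-- `L^q` estimate for the difference of compositions with two approximate
characteristic maps `X₁(wᵢ) : x ↦ x - Δt·wᵢ(x)`:
`‖v∘X₁(w₁) - v∘X₁(w₂)‖_{L^q} ≤ 2^{1/(q·p')}·Δt·‖w₁ - w₂‖_{L^{pq}}·‖ ‖Dv‖_F ‖_{L^{q·p'}}`. -/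
theorem Lq_diff_comp_characteristic (d m : ℕ) (hd : d = 2 ∨ d = 3)
    (q : ℝ) (hq : 1 ≤ q)
    (p p' : ENNReal) (hp : 1 ≤ p) (hp' : 1 ≤ p') (hconj : p⁻¹ + p'⁻¹ = 1)
    (Δt L : ℝ) (hΔt : 0 < Δt) (hL : 0 ≤ L) (hΔtL : Δt * L ≤ 1 / 4)
    (w₁ w₂ : EuclideanSpace ℝ (Fin d) → EuclideanSpace ℝ (Fin d))
    (hw₁ : Differentiable ℝ w₁) (hw₂ : Differentiable ℝ w₂)
    (hJ₁ : ∀ x, jacobianFrobeniusNorm w₁ x ≤ L)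
    (hJ₂ : ∀ x, jacobianFrobeniusNorm w₂ x ≤ L)
    (v : EuclideanSpace ℝ (Fin d) → EuclideanSpace ℝ (Fin m))
    (hv : ContDiff ℝ 1 v) (hvsupp : HasCompactSupport v) :
    eLpNorm (fun x => v (x - Δt • w₁ x) - v (x - Δt • w₂ x))
        (ENNReal.ofReal q) volume ≤
      (2 : ENNReal) ^ ((ENNReal.ofReal q * p')⁻¹).toReal * ENNReal.ofReal Δt *
        eLpNorm (fun x => w₁ x - w₂ x) (p * ENNReal.ofReal q) volume *
        eLpNorm (fun y => jacobianFrobeniusNorm v y) (ENNReal.ofReal q * p') volume := by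
  have hd4 : d ≤ 4 := by omega
  refine (Lq_diff_comp_characteristic_general (one_le_ofReal.2 hq) hconj hΔt.le
    (hΔtL.trans_lt (by norm_num)) hw₁ hw₂ hJ₁ hJ₂ hv).trans ?_
  gcongr
  exact ENNReal.ofReal_le_ofNat.2 (exp_sqrt_mul_div_one_sub_le_two hd4 hΔtL)
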